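/- Let α > 0 and b_k = 1/(k+1)^α for k ≥ 0. Then, in the linear setting, conditions (C1): lim_{n→∞} (1 − h_n)·ln n = 0 and (C2): sup_{k≥0} (b_k − b_{k+1})/b_{k+1} < ∞ both hold; consequently lim_{n→∞} H_{h_n}(J_n) = 1. -/

import Mathlib

open Set Filter MeasureTheory Topology

noncomputable section

/-- Composition `g_{i₁} ∘ g_{i₂} ∘ ⋯ ∘ g_{i_l}` along a finite word. -/
def wordComp (g : ℕ → ℝ → ℝ) : List ℕ → ℝ → ℝ
  | [] => id
  | k :: w => g k ∘ wordComp g w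

/-- The limit set `J_n` of the IFS `S_n = {g_1, …, g_n}`. -/
def limitSet (g : ℕ → ℝ → ℝ) (n : ℕ) : Set ℝ :=
  ⋂ l : ℕ, ⋃ w ∈ {w : List ℕ | w.length = l + 1 ∧ ∀ i ∈ w, 1 ≤ i ∧ i ≤ n},
    wordComp g w '' Set.Icc (0 : ℝ) 1

/-- The decreasing affine map `g_k(x) = b_{k-1} - (b_{k-1} - b_k)·x`. -/
def gAff (b : ℕ → ℝ) (k : ℕ) (x : ℝ) : ℝ := b (k - 1) - (b (k - 1) - b k) * x

/-!
Covering `J_n` by cylinders gives `H_h(J_n) ≤ 1` for `h = h_n`, because `∑ a_k ^ h = 1`. For the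
lower bound, let `f` be the distribution function of the self-similar measure on `J_n` with weights
`a_k ^ h`, a limit of iterates of `pushforwardCDF` starting from the identity. It maps `J_n` onto
`[0, 1]`, so if it is `h`-Hölder with constant `C`, then `1 ≤ C * H_h(J_n)`; it remains to bound `C`
by a quantity tending to `1`. By the power mean inequality, lengths `L_1, …, L_n` satisfy
`∑ L_k ^ h ≤ n ^ (1 - h) * (∑ L_k) ^ h`, and `n ^ (1 - h) → 1` is just (C1). Hence cutting
an interval at the points `b_k` costs only a factor near `1`. An interval not contained in the
interior of a single branch is cut into pieces touching an endpoint of their branch, so the Hölder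
constant is controlled by the one at `1`, and that one by the one at `0`. An interval `[0, x]`
contains only one incomplete branch, whose relative length is at most some `θ < 1` by (C2), so the
constant at `0` contracts to a fixed point near `1`.

Condition (C1) follows from the entropy estimate `a ^ h ≥ a + (1 - h) * (-a * log a)`: summing over
`k` gives `(1 - h_n) * (-a_1 * log a_1) ≤ b_n`, and `b_n * log n → 0` when `b_n = (n + 1) ^ (-α)`.
-/

open scoped NNReal ENNReal

lemma exists_lt_mem_Icc_succ {β : Type*} [LinearOrder β] {s : ℕ → β} {n : ℕ} {y : β} (hn : 0 < n)
    (hy₀ : y ≤ s 0) (hyn : s n ≤ y) : ∃ k < n, y ∈ Icc (s (k + 1)) (s k) := by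
  induction n, hn using Nat.le_induction with
  | base => exact ⟨0, one_pos, hyn, hy₀⟩
  | succ n _ ih =>
    rcases le_total y (s n) with hy | hy
    · exact ⟨n, n.lt_succ_self, hyn, hy⟩
    · obtain ⟨k, hk, hky⟩ := ih hy
      exact ⟨k, hk.trans n.lt_succ_self, hky⟩

lemma pos_of_sum_range_eq_one {R : Type*} [NonAssocSemiring R] [Nontrivial R] {a : ℕ → R} {n : ℕ}
    (hsum : ∑ k ∈ Finset.range n, a k = 1) : 0 < n :=
  Nat.pos_of_ne_zero fun hn => by simp [hn] at hsum

lemma one_le_natCast_rpow_one_sub {n : ℕ} {h : ℝ} (hn : 0 < n) (h1 : h ≤ 1) :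
    1 ≤ (n : ℝ) ^ (1 - h) :=
  Real.one_le_rpow (Nat.one_le_cast.2 hn) (sub_nonneg.2 h1)

lemma sum_rpow_le_card_rpow_mul_rpow_sum {ι : Type*} (s : Finset ι) {a : ι → ℝ} {h : ℝ}
    (h0 : 0 < h) (h1 : h ≤ 1) (ha : ∀ i ∈ s, 0 ≤ a i) :
    ∑ i ∈ s, a i ^ h ≤ (s.card : ℝ) ^ (1 - h) * (∑ i ∈ s, a i) ^ h := by
  have hsum : 0 ≤ ∑ i ∈ s, a i ^ h := Finset.sum_nonneg fun i hi => Real.rpow_nonneg (ha i hi) h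
  have hmean := Real.rpow_sum_le_const_mul_sum_rpow_of_nonneg s (one_le_inv₀ h0 |>.2 h1)
    fun i hi => Real.rpow_nonneg (ha i hi) h
  have hroot : ∑ i ∈ s, (a i ^ h) ^ h⁻¹ = ∑ i ∈ s, a i :=
    Finset.sum_congr rfl fun i hi => Real.rpow_rpow_inv (ha i hi) h0.ne'
  rw [hroot] at hmean
  calc ∑ i ∈ s, a i ^ h = ((∑ i ∈ s, a i ^ h) ^ h⁻¹) ^ h :=
        (Real.rpow_inv_rpow hsum h0.ne').symm
    _ ≤ ((s.card : ℝ) ^ (h⁻¹ - 1) * ∑ i ∈ s, a i) ^ h := by gcongr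
    _ = (s.card : ℝ) ^ (1 - h) * (∑ i ∈ s, a i) ^ h := by
        rw [Real.mul_rpow (by positivity) (Finset.sum_nonneg ha), ← Real.rpow_mul (by positivity),
          sub_mul, inv_mul_cancel₀ h0.ne', one_mul]

lemma add_mul_negMulLog_le_rpow {a : ℝ} (ha : 0 < a) (h : ℝ) :
    a + (1 - h) * Real.negMulLog a ≤ a ^ h := by
  calc a + (1 - h) * Real.negMulLog a = a * ((h - 1) * Real.log a + 1) := by
        rw [Real.negMulLog]; ring
    _ ≤ a * Real.exp ((h - 1) * Real.log a) := by
        gcongr; exact Real.add_one_le_exp _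
    _ = a ^ h := by
        rw [mul_comm _ (Real.log a), ← Real.rpow_def_of_pos ha, mul_comm,
          ← Real.rpow_add_one ha.ne', sub_add_cancel]

section CompactLimit

variable {X Y : Type*}

lemma exists_tendsto_ultrafilter_of_isCompact {ι : Type*} [TopologicalSpace X] {S : Set X}
    (hS : IsCompact S) (U : Ultrafilter ι) {v : ι → X} (hv : ∀ i, v i ∈ S) :
    ∃ z ∈ S, Tendsto v U (𝓝 z) :=
  hS.ultrafilter_le_nhds' (U.map v) (Ultrafilter.mem_map.2 (Filter.univ_mem' hv))

lemma exists_holderOnWith_surjOn_iInter [EMetricSpace X] [EMetricSpace Y] {C r : ℝ≥0} (hr : 0 < r)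
    {E : ℕ → Set X} (hE : Antitone E) (hEcompact : ∀ l, IsCompact (E l))
    {S : Set Y} (hS : IsCompact S) {f : ℕ → X → Y} (hholder : ∀ l, HolderOnWith C r (f l) (E 0))
    (hmaps : ∀ l, MapsTo (f l) (E 0) S) (hsurj : ∀ l, SurjOn (f l) (E l) S) :
    ∃ φ : X → Y, HolderOnWith C r φ (⋂ l, E l) ∧ SurjOn φ (⋂ l, E l) S := by
  let U : Ultrafilter ℕ := hyperfilter ℕ
  have hU : (U : Filter ℕ) ≤ atTop := Nat.hyperfilter_le_atTop
  have hlimit : ∀ x, ∃ z, x ∈ E 0 → Tendsto (fun l => f l x) U (𝓝 z) := fun x => by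
    by_cases hx : x ∈ E 0
    · obtain ⟨z, -, hz⟩ := exists_tendsto_ultrafilter_of_isCompact hS U fun l => hmaps l hx
      exact ⟨z, fun _ => hz⟩
    · exact ⟨f 0 x, fun h => absurd h hx⟩
  choose φ hφ using hlimit
  refine ⟨φ, fun x hx y hy => ?_, fun y hy => ?_⟩
  · have hx₀ := mem_iInter.1 hx 0
    have hy₀ := mem_iInter.1 hy 0
    exact le_of_tendsto ((hφ x hx₀).edist (hφ y hy₀))
      (Eventually.of_forall fun l => hholder l x hx₀ y hy₀)
  · choose x hx hxy using fun l => hsurj l hy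
    have hx₀ : ∀ l, x l ∈ E 0 := fun l => hE (Nat.zero_le l) (hx l)
    obtain ⟨z, hz₀, hz⟩ := exists_tendsto_ultrafilter_of_isCompact (hEcompact 0) U hx₀
    have hzE : z ∈ ⋂ l, E l := mem_iInter.2 fun l =>
      (hEcompact l).isClosed.mem_of_tendsto hz <| hU <|
        (eventually_ge_atTop l).mono fun m hm => hE hm (hx m)
    have hbound : Tendsto (fun l => (C : ℝ≥0∞) * edist (x l) z ^ (r : ℝ)) U (𝓝 0) := by
      have hdist : Tendsto (fun l => edist (x l) z) U (𝓝 0) := tendsto_iff_edist_tendsto_0.1 hz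
      simpa [ENNReal.zero_rpow_of_pos (NNReal.coe_pos.2 hr)] using
        ENNReal.Tendsto.const_mul (hdist.ennrpow_const (r : ℝ)) (Or.inr ENNReal.coe_ne_top)
    have hle : edist y (φ z) ≤ 0 :=
      le_of_tendsto_of_tendsto (tendsto_const_nhds.edist (hφ z hz₀)) hbound <|
        Eventually.of_forall fun l => by
          simpa only [hxy l] using hholder l (x l) (hx₀ l) z hz₀
    exact ⟨z, hzE, (edist_le_zero.1 hle).symm⟩

lemma hausdorffMeasure_le_mul_hausdorffMeasure_iInter [EMetricSpace X] [MeasurableSpace X]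
    [BorelSpace X] [EMetricSpace Y] [MeasurableSpace Y] [BorelSpace Y] {C r : ℝ≥0} (hr : 0 < r)
    {E : ℕ → Set X} (hE : Antitone E) (hEcompact : ∀ l, IsCompact (E l))
    {S : Set Y} (hS : IsCompact S) {f : ℕ → X → Y} (hholder : ∀ l, HolderOnWith C r (f l) (E 0))
    (hmaps : ∀ l, MapsTo (f l) (E 0) S) (hsurj : ∀ l, SurjOn (f l) (E l) S)
    {d : ℝ} (hd : 0 ≤ d) :
    μH[d] S ≤ (C : ℝ≥0∞) ^ d * μH[r * d] (⋂ l, E l) := by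
  obtain ⟨φ, hφ, hφsurj⟩ :=
    exists_holderOnWith_surjOn_iInter hr hE hEcompact hS hholder hmaps hsurj
  exact (measure_mono hφsurj).trans (hφ.hausdorffMeasure_image_le hr hd)

end CompactLimit

/-- The `l`-th approximation `⋃_{|w| = l} g_w([0,1])` of the limit set of `{g_1, …, g_n}`. -/
def cylinderUnion (g : ℕ → ℝ → ℝ) (n l : ℕ) : Set ℝ :=
  ⋃ w ∈ {w : List ℕ | w.length = l ∧ ∀ i ∈ w, 1 ≤ i ∧ i ≤ n}, wordComp g w '' Icc (0 : ℝ) 1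

section CylinderUnion

variable {g : ℕ → ℝ → ℝ} {n : ℕ}

lemma limitSet_eq_iInter_cylinderUnion_succ (g : ℕ → ℝ → ℝ) (n : ℕ) :
    limitSet g n = ⋂ l, cylinderUnion g n (l + 1) := rfl

lemma cylinderUnion_zero (g : ℕ → ℝ → ℝ) (n : ℕ) : cylinderUnion g n 0 = Icc 0 1 := by
  ext x
  simp +contextual [cylinderUnion, List.length_eq_zero_iff, wordComp]

lemma cylinderUnion_succ (g : ℕ → ℝ → ℝ) (n l : ℕ) :
    cylinderUnion g n (l + 1) = ⋃ k ∈ Finset.range n, g (k + 1) '' cylinderUnion g n l := by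
  ext x
  simp only [cylinderUnion, mem_iUnion, exists_prop, image_iUnion, ← image_comp, Finset.mem_range]
  constructor
  · rintro ⟨_ | ⟨k, w⟩, ⟨hlen, hw⟩, hx⟩
    · simp at hlen
    · obtain ⟨⟨hk, hkn⟩, htail⟩ := List.forall_mem_cons.1 hw
      obtain ⟨k, rfl⟩ := Nat.exists_eq_add_of_le' hk
      exact ⟨k, hkn, w, ⟨Nat.succ_injective hlen, htail⟩, hx⟩
  · rintro ⟨k, hk, w, ⟨rfl, hw⟩, hx⟩
    exact ⟨(k + 1) :: w, ⟨rfl, List.forall_mem_cons.2 ⟨⟨k.succ_pos, hk⟩, hw⟩⟩, hx⟩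

lemma isCompact_cylinderUnion (hg : ∀ k, Continuous (g (k + 1))) (l : ℕ) :
    IsCompact (cylinderUnion g n l) := by
  induction l with
  | zero => exact cylinderUnion_zero g n ▸ isCompact_Icc
  | succ l ih =>
    rw [cylinderUnion_succ]
    exact Finset.isCompact_biUnion _ fun k _ => ih.image (hg k)

lemma antitone_cylinderUnion (hg : ∀ k, MapsTo (g (k + 1)) (Icc 0 1) (Icc 0 1)) :
    Antitone (cylinderUnion g n) := by
  refine antitone_nat_of_succ_le fun l => ?_
  induction l with
  | zero =>
    rw [cylinderUnion_succ, cylinderUnion_zero]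
    exact iUnion₂_subset fun k _ => (hg k).image_subset
  | succ l ih =>
    calc cylinderUnion g n (l + 1 + 1)
        = ⋃ k ∈ Finset.range n, g (k + 1) '' cylinderUnion g n (l + 1) := cylinderUnion_succ g n _
      _ ⊆ ⋃ k ∈ Finset.range n, g (k + 1) '' cylinderUnion g n l :=
        iUnion₂_mono fun k _ => image_mono ih
      _ = cylinderUnion g n (l + 1) := (cylinderUnion_succ g n l).symm

lemma limitSet_eq_iInter_cylinderUnion (hg : ∀ k, MapsTo (g (k + 1)) (Icc 0 1) (Icc 0 1)) :
    limitSet g n = ⋂ l, cylinderUnion g n l := by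
  rw [limitSet_eq_iInter_cylinderUnion_succ]
  exact (antitone_cylinderUnion hg).iInter_nat_add 1

lemma exists_cover_cylinderUnion {r : ℕ → ℝ≥0} {q : ℝ≥0} {h : ℝ} (h0 : 0 ≤ h)
    (hlip : ∀ k, LipschitzWith (r k) (g (k + 1))) (hr : ∀ k, r k ≤ q)
    (hsum : ∑ k ∈ Finset.range n, r k ^ h ≤ 1) (l : ℕ) :
    ∃ (ι : Type) (_ : Fintype ι) (t : ι → Set ℝ), cylinderUnion g n l ⊆ ⋃ i, t i ∧
      (∀ i, Metric.ediam (t i) ≤ (q : ℝ≥0∞) ^ l) ∧ ∑ i, Metric.ediam (t i) ^ h ≤ 1 := by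
  induction l with
  | zero =>
    refine ⟨Unit, inferInstance, fun _ => Icc 0 1, ?_, by simp, by simp⟩
    rw [cylinderUnion_zero, iUnion_const]
  | succ l ih =>
    obtain ⟨ι, _, t, hcover, hdiam, hdiamsum⟩ := ih
    refine ⟨Fin n × ι, inferInstance, fun i => g (i.1 + 1) '' t i.2, ?_, ?_, ?_⟩
    · rw [cylinderUnion_succ]
      refine iUnion₂_subset fun k hk => (image_mono hcover).trans ?_
      rw [image_iUnion]
      exact iUnion_subset fun i =>
        subset_iUnion_of_subset (⟨k, Finset.mem_range.1 hk⟩, i) subset_rfl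
    · rintro ⟨k, i⟩
      calc Metric.ediam (g (k + 1) '' t i) ≤ r k * Metric.ediam (t i) := (hlip k).ediam_image_le _
        _ ≤ q * (q : ℝ≥0∞) ^ l := by gcongr; exacts [hr k, hdiam i]
        _ = (q : ℝ≥0∞) ^ (l + 1) := (pow_succ' _ _).symm
    · have hsum' : ∑ k : Fin n, (r k : ℝ≥0∞) ^ h ≤ 1 := by
        rw [Fin.sum_univ_eq_sum_range fun k => (r k : ℝ≥0∞) ^ h]
        simp_rw [← ENNReal.coe_rpow_of_nonneg _ h0]
        exact_mod_cast hsum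
      calc ∑ i : Fin n × ι, Metric.ediam (g (i.1 + 1) '' t i.2) ^ h
          ≤ ∑ i : Fin n × ι, (r i.1 : ℝ≥0∞) ^ h * Metric.ediam (t i.2) ^ h := by
            gcongr with i
            rw [← ENNReal.mul_rpow_of_nonneg _ _ h0]
            gcongr
            exact (hlip i.1).ediam_image_le _
        _ = (∑ k : Fin n, (r k : ℝ≥0∞) ^ h) * ∑ i, Metric.ediam (t i) ^ h := by
            rw [Fintype.sum_prod_type, Finset.sum_mul_sum]
        _ ≤ 1 := mul_le_one' hsum' hdiamsum

lemma hausdorffMeasure_limitSet_le_one {r : ℕ → ℝ≥0} {q : ℝ≥0} {h : ℝ} (h0 : 0 ≤ h)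
    (hlip : ∀ k, LipschitzWith (r k) (g (k + 1))) (hr : ∀ k, r k ≤ q) (hq : q < 1)
    (hsum : ∑ k ∈ Finset.range n, r k ^ h ≤ 1) :
    μH[h] (limitSet g n) ≤ 1 := by
  choose ι _ t hcover hdiam hdiamsum using
    fun l => exists_cover_cylinderUnion h0 hlip hr hsum (l + 1)
  have hmesh : Tendsto (fun l : ℕ => (q : ℝ≥0∞) ^ (l + 1)) atTop (𝓝 0) :=
    (tendsto_add_atTop_iff_nat 1).2
      (ENNReal.tendsto_pow_atTop_nhds_zero_of_lt_one (by exact_mod_cast hq))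
  calc μH[h] (limitSet g n)
      ≤ liminf (fun l => ∑ i, Metric.ediam (t l i) ^ h) atTop :=
        Measure.hausdorffMeasure_le_liminf_sum h _ _ hmesh t (Eventually.of_forall hdiam)
          (Eventually.of_forall fun l => (iInter_subset _ l).trans (hcover l))
    _ ≤ liminf (fun _ => 1) atTop := liminf_le_liminf (Eventually.of_forall hdiamsum)
    _ = 1 := liminf_const 1

end CylinderUnion

/-- The length `b_k - b_{k+1}` of the image of `gAff b (k + 1)`. Indices start at `0`, so this is
`a_{k+1}` in the notation of the paper. -/
def gap (b : ℕ → ℝ) (k : ℕ) : ℝ := b k - b (k + 1)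

/-- The inverse of `gAff b (k + 1)`, extended to `ℝ` by clamping its values to `[0, 1]`. -/
def inverseBranch (b : ℕ → ℝ) (k : ℕ) (x : ℝ) : ℝ := max 0 (min 1 ((b k - x) / gap b k))

section InverseBranch

variable {b : ℕ → ℝ} {k n : ℕ} {x y : ℝ}

lemma gap_pos (hb : StrictAnti b) (k : ℕ) : 0 < gap b k := sub_pos.2 (hb k.lt_succ_self)

lemma sum_range_gap (b : ℕ → ℝ) (n : ℕ) : ∑ k ∈ Finset.range n, gap b k = b 0 - b n :=
  Finset.sum_range_sub' b n

lemma gAff_succ (b : ℕ → ℝ) (k : ℕ) (x : ℝ) : gAff b (k + 1) x = b k - gap b k * x := rfl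

lemma lipschitzWith_gAff_succ (hb : StrictAnti b) (k : ℕ) :
    LipschitzWith (gap b k).toNNReal (gAff b (k + 1)) := by
  refine LipschitzWith.of_dist_le_mul fun x y => le_of_eq ?_
  rw [gAff_succ, gAff_succ, dist_sub_left, Real.coe_toNNReal _ (gap_pos hb k).le, Real.dist_eq,
    ← mul_sub, abs_mul, abs_of_pos (gap_pos hb k), Real.dist_eq]

lemma mapsTo_gAff_succ (hb : StrictAnti b) (k : ℕ) :
    MapsTo (gAff b (k + 1)) (Icc 0 1) (Icc (b (k + 1)) (b k)) := by
  rintro x ⟨hx0, hx1⟩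
  have hlow : 0 ≤ gap b k * x := mul_nonneg (gap_pos hb k).le hx0
  have hupp : gap b k * x ≤ gap b k := mul_le_of_le_one_right (gap_pos hb k).le hx1
  rw [gAff_succ]
  exact ⟨by unfold gap at *; linarith, by linarith⟩

lemma inverseBranch_mem_Icc (b : ℕ → ℝ) (k : ℕ) (x : ℝ) : inverseBranch b k x ∈ Icc (0 : ℝ) 1 :=
  ⟨le_max_left _ _, max_le zero_le_one (min_le_left _ _)⟩

lemma antitone_inverseBranch (hb : StrictAnti b) (k : ℕ) : Antitone (inverseBranch b k) := by
  intro x y hxy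
  have := (gap_pos hb k).le
  unfold inverseBranch
  gcongr

lemma inverseBranch_gAff_succ (hb : StrictAnti b) (k : ℕ) (hx : x ∈ Icc (0 : ℝ) 1) :
    inverseBranch b k (gAff b (k + 1) x) = x := by
  rw [inverseBranch, gAff_succ, sub_sub_cancel, mul_div_cancel_left₀ _ (gap_pos hb k).ne',
    min_eq_right hx.2, max_eq_right hx.1]

lemma inverseBranch_eq_one (hb : StrictAnti b) (hx : x ≤ b (k + 1)) : inverseBranch b k x = 1 := by
  have hone : 1 ≤ (b k - x) / gap b k := by
    rw [one_le_div (gap_pos hb k), gap]; linarith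
  rw [inverseBranch, min_eq_left hone, max_eq_right zero_le_one]

lemma inverseBranch_eq_zero (hb : StrictAnti b) (hx : b k ≤ x) : inverseBranch b k x = 0 :=
  max_eq_left <| (min_le_right _ _).trans <|
    div_nonpos_of_nonpos_of_nonneg (sub_nonpos.2 hx) (gap_pos hb k).le

lemma gap_mul_inverseBranch (hb : StrictAnti b) (k : ℕ) (x : ℝ) :
    gap b k * inverseBranch b k x = max (b k) x - max (b (k + 1)) x := by
  have hlt : b (k + 1) < b k := hb k.lt_succ_self
  rcases le_total x (b (k + 1)) with hx | hx
  · rw [inverseBranch_eq_one hb hx, max_eq_left (hx.trans hlt.le), max_eq_left hx, mul_one, gap]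
  rw [max_eq_right hx]
  rcases le_total x (b k) with hxk | hxk
  · have hle : (b k - x) / gap b k ≤ 1 := by
      rw [div_le_one (gap_pos hb k), gap]; linarith
    rw [inverseBranch, min_eq_right hle,
      max_eq_right (div_nonneg (sub_nonneg.2 hxk) (gap_pos hb k).le),
      mul_div_cancel₀ _ (gap_pos hb k).ne', max_eq_left hxk]
  · rw [inverseBranch_eq_zero hb hxk, max_eq_right hxk, mul_zero, sub_self]

/-- The length of the part of `[x, y]` inside the image `[b_{k+1}, b_k]` of `gAff b (k + 1)`,
for `x ≤ y`. -/
def overlap (b : ℕ → ℝ) (k : ℕ) (x y : ℝ) : ℝ :=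
  gap b k * (inverseBranch b k x - inverseBranch b k y)

lemma overlap_eq (hb : StrictAnti b) (k : ℕ) (x y : ℝ) :
    overlap b k x y = (max (b (k + 1)) y - max (b (k + 1)) x) - (max (b k) y - max (b k) x) := by
  rw [overlap, mul_sub, gap_mul_inverseBranch hb, gap_mul_inverseBranch hb]
  ring

lemma overlap_eq_gap (hb : StrictAnti b) (hx : x ≤ b (k + 1)) (hy : b k ≤ y) :
    overlap b k x y = gap b k := by
  rw [overlap, inverseBranch_eq_one hb hx, inverseBranch_eq_zero hb hy, sub_zero, mul_one]

lemma overlap_of_mem_Icc (hb : StrictAnti b) (hx : x ≤ b (k + 1))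
    (hy : y ∈ Icc (b (k + 1)) (b k)) : overlap b k x y = y - b (k + 1) := by
  rw [overlap_eq hb, max_eq_right hy.1, max_eq_left hx, max_eq_left hy.2,
    max_eq_left (hx.trans (hb.antitone k.le_succ)), sub_self, sub_zero]

lemma overlap_nonneg (hb : StrictAnti b) (k : ℕ) (hxy : x ≤ y) : 0 ≤ overlap b k x y :=
  mul_nonneg (gap_pos hb k).le (sub_nonneg.2 (antitone_inverseBranch hb k hxy))

lemma sum_range_overlap_le (hb : StrictAnti b) (n : ℕ) (hxy : x ≤ y) :
    ∑ k ∈ Finset.range n, overlap b k x y ≤ y - x := by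
  have htelescope : ∑ k ∈ Finset.range n, overlap b k x y
      = (max (b n) y - max (b n) x) - (max (b 0) y - max (b 0) x) := by
    simp_rw [overlap_eq hb]
    exact Finset.sum_range_sub (fun k => max (b k) y - max (b k) x) n
  grind

lemma overlap_rpow (hb : StrictAnti b) (h : ℝ) (k : ℕ) (hxy : x ≤ y) :
    overlap b k x y ^ h = gap b k ^ h * (inverseBranch b k x - inverseBranch b k y) ^ h :=
  Real.mul_rpow (gap_pos hb k).le (sub_nonneg.2 (antitone_inverseBranch hb k hxy))

lemma overlap_le (hb : StrictAnti b) (k : ℕ) (hxy : x ≤ y) : overlap b k x y ≤ y - x := by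
  rw [overlap_eq hb]
  grind

lemma sum_range_overlap_rpow_le (hb : StrictAnti b) (n : ℕ) {h : ℝ} (h0 : 0 < h) (h1 : h ≤ 1)
    (hxy : x ≤ y) :
    ∑ k ∈ Finset.range n, overlap b k x y ^ h ≤ (n : ℝ) ^ (1 - h) * (y - x) ^ h := by
  have hmean := sum_rpow_le_card_rpow_mul_rpow_sum (Finset.range n) h0 h1
    fun k _ => overlap_nonneg hb k hxy
  rw [Finset.card_range] at hmean
  have hnonneg : 0 ≤ ∑ k ∈ Finset.range n, overlap b k x y :=
    Finset.sum_nonneg fun k _ => overlap_nonneg hb k hxy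
  refine hmean.trans ?_
  gcongr
  exact sum_range_overlap_le hb n hxy

end InverseBranch

/-- The distribution function of `∑ k < n, (gap b k) ^ h • (gAff b (k + 1))_* μ` when `f` is that of
a nonatomic probability measure `μ` on `[0, 1]`. -/
def pushforwardCDF (b : ℕ → ℝ) (h : ℝ) (n : ℕ) (f : ℝ → ℝ) (x : ℝ) : ℝ :=
  ∑ k ∈ Finset.range n, gap b k ^ h * (1 - f (inverseBranch b k x))

/-- `f` is a distribution function on `[0, 1]` that is `h`-Hölder with constant `K` at `0`, `D * K`
at `1` and `D ^ 2 * K` everywhere. For `D = n ^ (1 - h)` and suitable `K` this class is preserved by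
`pushforwardCDF b h n`, each constant being derived from the preceding one. -/
structure IsHolderCDF (h D K : ℝ) (f : ℝ → ℝ) : Prop where
  map_zero : f 0 = 0
  map_one : f 1 = 1
  monotoneOn : MonotoneOn f (Icc 0 1)
  le_at_zero : ∀ t ∈ Icc (0 : ℝ) 1, f t ≤ K * t ^ h
  le_at_one : ∀ s ∈ Icc (0 : ℝ) 1, 1 - f s ≤ D * K * (1 - s) ^ h
  sub_le : ∀ x ∈ Icc (0 : ℝ) 1, ∀ y ∈ Icc (0 : ℝ) 1, x ≤ y → f y - f x ≤ D ^ 2 * K * (y - x) ^ h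

section IsHolderCDF

variable {h D K : ℝ} {f : ℝ → ℝ}

lemma isHolderCDF_id (h1 : h ≤ 1) (hD : 1 ≤ D) (hK : 1 ≤ K) : IsHolderCDF h D K id := by
  have hle : ∀ t ∈ Icc (0 : ℝ) 1, ∀ c, 1 ≤ c → t ≤ c * t ^ h := fun t ht c hc =>
    (Real.self_le_rpow_of_le_one ht.1 ht.2 h1).trans
      (le_mul_of_one_le_left (Real.rpow_nonneg ht.1 h) hc)
  refine ⟨rfl, rfl, monotone_id.monotoneOn _, fun t ht => hle t ht K hK, fun s hs => ?_,
    fun x hx y hy hxy => ?_⟩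
  · exact hle (1 - s) ⟨by linarith [hs.2], by linarith [hs.1]⟩ _
      (one_le_mul_of_one_le_of_one_le hD hK)
  · exact hle (y - x) ⟨sub_nonneg.2 hxy, by linarith [hx.1, hy.2]⟩ _
      (one_le_mul_of_one_le_of_one_le (one_le_pow₀ hD) hK)

namespace IsHolderCDF

lemma mapsTo (hf : IsHolderCDF h D K f) : MapsTo f (Icc 0 1) (Icc 0 1) := by
  have hzero : (0 : ℝ) ∈ Icc (0 : ℝ) 1 := left_mem_Icc.2 zero_le_one
  have hone : (1 : ℝ) ∈ Icc (0 : ℝ) 1 := right_mem_Icc.2 zero_le_one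
  exact fun x hx => ⟨hf.map_zero ▸ hf.monotoneOn hzero hx hx.1,
    hf.map_one ▸ hf.monotoneOn hx hone hx.2⟩

lemma abs_sub_le (hf : IsHolderCDF h D K f) {x y : ℝ} (hx : x ∈ Icc (0 : ℝ) 1)
    (hy : y ∈ Icc (0 : ℝ) 1) : |f x - f y| ≤ D ^ 2 * K * |x - y| ^ h := by
  wlog hxy : x ≤ y generalizing x y
  · rw [abs_sub_comm, abs_sub_comm x]
    exact this hy hx (le_of_not_ge hxy)
  · rw [abs_sub_comm, abs_sub_comm x, abs_of_nonneg (sub_nonneg.2 hxy),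
      abs_of_nonneg (sub_nonneg.2 (hf.monotoneOn hx hy hxy))]
    exact hf.sub_le x hx y hy hxy

lemma holderOnWith (hf : IsHolderCDF h D K f) (h0 : 0 ≤ h) (hK : 0 ≤ K) :
    HolderOnWith (D ^ 2 * K).toNNReal h.toNNReal f (Icc 0 1) := by
  intro x hx y hy
  rw [edist_dist, edist_dist, Real.dist_eq, Real.dist_eq, Real.coe_toNNReal h h0,
    ENNReal.ofReal_rpow_of_nonneg (abs_nonneg _) h0, ENNReal.ofNNReal_toNNReal,
    ← ENNReal.ofReal_mul (by positivity)]
  exact ENNReal.ofReal_le_ofReal (hf.abs_sub_le hx hy)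

end IsHolderCDF

end IsHolderCDF

/-- `1 = b_0 > b_1 > ⋯ > 0`: the endpoints of adjacent intervals that the branches `gAff b k` map
`[0, 1]` onto. -/
structure IsUnitPartition (b : ℕ → ℝ) : Prop where
  strictAnti : StrictAnti b
  map_zero : b 0 = 1
  pos : ∀ k, 0 < b k

namespace IsUnitPartition

variable {b : ℕ → ℝ} {θ : ℝ}

lemma le_one (hb : IsUnitPartition b) (k : ℕ) : b k ≤ 1 :=
  hb.map_zero ▸ hb.strictAnti.antitone k.zero_le

lemma gap_pos (hb : IsUnitPartition b) (k : ℕ) : 0 < gap b k := _root_.gap_pos hb.strictAnti k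

lemma gap_lt_one (hb : IsUnitPartition b) (k : ℕ) : gap b k < 1 := by
  rw [gap]
  linarith [hb.le_one k, hb.pos (k + 1)]

lemma nonneg_of_gap_le (hb : IsUnitPartition b) (hθ : ∀ k, gap b k ≤ θ * b k) : 0 ≤ θ :=
  nonneg_of_mul_nonneg_left ((hb.gap_pos 0).le.trans (hθ 0)) (hb.pos 0)

lemma mapsTo_gAff_succ (hb : IsUnitPartition b) (k : ℕ) :
    MapsTo (gAff b (k + 1)) (Icc 0 1) (Icc 0 1) :=
  (_root_.mapsTo_gAff_succ hb.strictAnti k).mono_right (Icc_subset_Icc (hb.pos _).le (hb.le_one k))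

end IsUnitPartition

section PushforwardCDF

variable {b : ℕ → ℝ} {h D K θ : ℝ} {k n : ℕ} {f : ℝ → ℝ} {x y : ℝ}

lemma pushforwardCDF_sub (b : ℕ → ℝ) (h : ℝ) (n : ℕ) (f : ℝ → ℝ) (x y : ℝ) :
    pushforwardCDF b h n f y - pushforwardCDF b h n f x
      = ∑ k ∈ Finset.range n,
        gap b k ^ h * (f (inverseBranch b k x) - f (inverseBranch b k y)) := by
  rw [pushforwardCDF, pushforwardCDF, ← Finset.sum_sub_distrib]
  exact Finset.sum_congr rfl fun k _ => by ring

lemma pushforwardCDF_of_mem_Icc (hb : StrictAnti b) (hf0 : f 0 = 0) (hf1 : f 1 = 1) (hk : k < n)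
    (hx : x ∈ Icc (b (k + 1)) (b k)) :
    pushforwardCDF b h n f x = gap b k ^ h * (1 - f (inverseBranch b k x))
      + ∑ j ∈ Finset.Ico (k + 1) n, gap b j ^ h := by
  have hbefore : ∀ j ∈ Finset.Ico 0 k, gap b j ^ h * (1 - f (inverseBranch b j x)) = 0 :=
    fun j hj => by
      have hjk : b k ≤ b (j + 1) := hb.antitone (Finset.mem_Ico.1 hj).2
      rw [inverseBranch_eq_one hb (hx.2.trans hjk), hf1, sub_self, mul_zero]
  have hafter : ∀ j ∈ Finset.Ico (k + 1) n,
      gap b j ^ h * (1 - f (inverseBranch b j x)) = gap b j ^ h := fun j hj => by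
    have hjk : b j ≤ b (k + 1) := hb.antitone (Finset.mem_Ico.1 hj).1
    rw [inverseBranch_eq_zero hb (hjk.trans hx.1), hf0, sub_zero, mul_one]
  rw [pushforwardCDF, Finset.range_eq_Ico, ← Finset.sum_Ico_consecutive _ k.zero_le hk.le,
    Finset.sum_eq_zero hbefore, zero_add, Finset.sum_eq_sum_Ico_succ_bot hk,
    Finset.sum_congr rfl hafter]

lemma pushforwardCDF_eq_zero (hb : StrictAnti b) (hf1 : f 1 = 1) (hx : x ≤ b n) :
    pushforwardCDF b h n f x = 0 :=
  Finset.sum_eq_zero fun k hk => by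
    have hkn : b n ≤ b (k + 1) := hb.antitone (Finset.mem_range.1 hk)
    rw [inverseBranch_eq_one hb (hx.trans hkn), hf1, sub_self, mul_zero]

lemma pushforwardCDF_one (hb : IsUnitPartition b) (hf0 : f 0 = 0) :
    pushforwardCDF b h n f 1 = ∑ k ∈ Finset.range n, gap b k ^ h :=
  Finset.sum_congr rfl fun k _ => by
    rw [inverseBranch_eq_zero hb.strictAnti (hb.le_one k), hf0, sub_zero, mul_one]

lemma monotone_pushforwardCDF (hb : StrictAnti b) (hf : MonotoneOn f (Icc 0 1)) :
    Monotone (pushforwardCDF b h n f) := fun x y hxy => by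
  unfold pushforwardCDF
  gcongr with k
  · exact Real.rpow_nonneg (gap_pos hb k).le h
  · exact hf (inverseBranch_mem_Icc b k y) (inverseBranch_mem_Icc b k x)
      (antitone_inverseBranch hb k hxy)

namespace IsHolderCDF

lemma gap_rpow_mul_sub_le (hf : IsHolderCDF h D K f) (hb : StrictAnti b) (hxy : x ≤ y) :
    gap b k ^ h * (f (inverseBranch b k x) - f (inverseBranch b k y))
      ≤ D ^ 2 * K * overlap b k x y ^ h := by
  rw [overlap_rpow hb h k hxy, mul_left_comm]
  exact mul_le_mul_of_nonneg_left
    (hf.sub_le _ (inverseBranch_mem_Icc b k y) _ (inverseBranch_mem_Icc b k x)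
      (antitone_inverseBranch hb k hxy))
    (Real.rpow_nonneg (gap_pos hb k).le h)

lemma gap_rpow_mul_sub_le_of_le_right (hf : IsHolderCDF h D K f) (hb : StrictAnti b) (hxy : x ≤ y)
    (hy : b k ≤ y) :
    gap b k ^ h * (f (inverseBranch b k x) - f (inverseBranch b k y))
      ≤ K * overlap b k x y ^ h := by
  rw [overlap_rpow hb h k hxy, mul_left_comm, inverseBranch_eq_zero hb hy, hf.map_zero, sub_zero,
    sub_zero]
  exact mul_le_mul_of_nonneg_left (hf.le_at_zero _ (inverseBranch_mem_Icc b k x))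
    (Real.rpow_nonneg (gap_pos hb k).le h)

lemma gap_rpow_mul_sub_le_of_le_left (hf : IsHolderCDF h D K f) (hb : StrictAnti b) (hxy : x ≤ y)
    (hx : x ≤ b (k + 1)) :
    gap b k ^ h * (f (inverseBranch b k x) - f (inverseBranch b k y))
      ≤ D * K * overlap b k x y ^ h := by
  rw [overlap_rpow hb h k hxy, mul_left_comm, inverseBranch_eq_one hb hx, hf.map_one]
  exact mul_le_mul_of_nonneg_left (hf.le_at_one _ (inverseBranch_mem_Icc b k y))
    (Real.rpow_nonneg (gap_pos hb k).le h)

end IsHolderCDF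

lemma sub_rpow_add_sum_gap_rpow_le (hb : IsUnitPartition b) (h0 : 0 < h) (h1 : h ≤ 1) (hk : k < n)
    (hx : x ∈ Icc (b (k + 1)) (b k)) :
    (x - b (k + 1)) ^ h + ∑ j ∈ Finset.Ico (k + 1) n, gap b j ^ h ≤ (n : ℝ) ^ (1 - h) * x ^ h := by
  have hx0 : 0 ≤ x := (hb.pos _).le.trans hx.1
  have hafter : ∀ j ∈ Finset.Ico (k + 1) n, gap b j = overlap b j 0 x := fun j hj =>
    (overlap_eq_gap hb.strictAnti (hb.pos _).le
      ((hb.strictAnti.antitone (Finset.mem_Ico.1 hj).1).trans hx.1)).symm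
  calc (x - b (k + 1)) ^ h + ∑ j ∈ Finset.Ico (k + 1) n, gap b j ^ h
      = ∑ j ∈ Finset.Ico k n, overlap b j 0 x ^ h := by
        rw [Finset.sum_eq_sum_Ico_succ_bot hk,
          overlap_of_mem_Icc hb.strictAnti (hb.pos (k + 1)).le hx]
        exact congrArg _ (Finset.sum_congr rfl fun j hj => by rw [hafter j hj])
    _ ≤ ∑ j ∈ Finset.range n, overlap b j 0 x ^ h := by
        rw [Finset.range_eq_Ico]
        exact Finset.sum_le_sum_of_subset_of_nonneg (Finset.Ico_subset_Ico_left k.zero_le)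
          fun j _ _ => Real.rpow_nonneg (overlap_nonneg hb.strictAnti j hx0) h
    _ ≤ (n : ℝ) ^ (1 - h) * x ^ h := by
        simpa only [sub_zero] using sum_range_overlap_rpow_le hb.strictAnti n h0 h1 hx0

lemma sub_succ_le_mul (hθ : gap b k ≤ θ * b k) (hθ1 : θ ≤ 1) (hx : x ≤ b k) :
    x - b (k + 1) ≤ θ * x := by
  have hmul : (1 - θ) * x ≤ (1 - θ) * b k := mul_le_mul_of_nonneg_left hx (sub_nonneg.2 hθ1)
  rw [gap] at hθ
  linarith

namespace IsHolderCDF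

lemma pushforwardCDF_le_at_zero (hf : IsHolderCDF h ((n : ℝ) ^ (1 - h)) K f)
    (hb : IsUnitPartition b) (h0 : 0 < h) (h1 : h ≤ 1) (hn : 0 < n) (hθ1 : θ ≤ 1)
    (hθ : ∀ k, gap b k ≤ θ * b k) (hK1 : 1 ≤ K)
    (hK : (n : ℝ) ^ (1 - h) + ((n : ℝ) ^ (1 - h) * K - 1) * θ ^ h ≤ K) (hx : x ∈ Icc (0 : ℝ) 1) :
    pushforwardCDF b h n f x ≤ K * x ^ h := by
  rcases le_total x (b n) with hxn | hxn
  · rw [pushforwardCDF_eq_zero hb.strictAnti hf.map_one hxn]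
    exact mul_nonneg (zero_le_one.trans hK1) (Real.rpow_nonneg hx.1 h)
  obtain ⟨k, hk, hxk⟩ := exists_lt_mem_Icc_succ hn (hx.2.trans_eq hb.map_zero.symm) hxn
  set D := (n : ℝ) ^ (1 - h)
  have hDK : 1 ≤ D * K := one_le_mul_of_one_le_of_one_le (one_le_natCast_rpow_one_sub hn h1) hK1
  have hlast : gap b k ^ h * (1 - f (inverseBranch b k x)) ≤ D * K * (x - b (k + 1)) ^ h := by
    have hterm := hf.gap_rpow_mul_sub_le_of_le_left hb.strictAnti hx.1 (hb.pos (k + 1)).le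
    rwa [inverseBranch_eq_one hb.strictAnti (hb.pos (k + 1)).le, hf.map_one,
      overlap_of_mem_Icc hb.strictAnti (hb.pos (k + 1)).le hxk] at hterm
  have hpart : (x - b (k + 1)) ^ h ≤ θ ^ h * x ^ h := by
    rw [← Real.mul_rpow (hb.nonneg_of_gap_le hθ) hx.1]
    exact Real.rpow_le_rpow (sub_nonneg.2 hxk.1) (sub_succ_le_mul (hθ k) hθ1 hxk.2) h0.le
  calc pushforwardCDF b h n f x
      = gap b k ^ h * (1 - f (inverseBranch b k x)) + ∑ j ∈ Finset.Ico (k + 1) n, gap b j ^ h :=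
        pushforwardCDF_of_mem_Icc hb.strictAnti hf.map_zero hf.map_one hk hxk
    _ ≤ (D * K - 1) * (x - b (k + 1)) ^ h
        + ((x - b (k + 1)) ^ h + ∑ j ∈ Finset.Ico (k + 1) n, gap b j ^ h) := by linarith
    _ ≤ (D * K - 1) * (θ ^ h * x ^ h) + D * x ^ h :=
        add_le_add (mul_le_mul_of_nonneg_left hpart (sub_nonneg.2 hDK))
          (sub_rpow_add_sum_gap_rpow_le hb h0 h1 hk hxk)
    _ = (D + (D * K - 1) * θ ^ h) * x ^ h := by ring
    _ ≤ K * x ^ h := mul_le_mul_of_nonneg_right hK (Real.rpow_nonneg hx.1 h)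

lemma one_sub_pushforwardCDF_le (hf : IsHolderCDF h D K f) (hb : IsUnitPartition b) (h0 : 0 < h)
    (h1 : h ≤ 1) (hsum : ∑ k ∈ Finset.range n, gap b k ^ h = 1) (hK : 0 ≤ K) (hx : x ≤ 1) :
    1 - pushforwardCDF b h n f x ≤ (n : ℝ) ^ (1 - h) * K * (1 - x) ^ h := by
  have hone : pushforwardCDF b h n f 1 = 1 := (pushforwardCDF_one hb hf.map_zero).trans hsum
  calc 1 - pushforwardCDF b h n f x
      = ∑ k ∈ Finset.range n, gap b k ^ h * (f (inverseBranch b k x) - f (inverseBranch b k 1)) :=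
        by rw [← pushforwardCDF_sub, hone]
    _ ≤ ∑ k ∈ Finset.range n, K * overlap b k x 1 ^ h :=
        Finset.sum_le_sum fun k _ =>
          hf.gap_rpow_mul_sub_le_of_le_right hb.strictAnti hx (hb.le_one k)
    _ ≤ K * ((n : ℝ) ^ (1 - h) * (1 - x) ^ h) := by
        rw [← Finset.mul_sum]
        exact mul_le_mul_of_nonneg_left (sum_range_overlap_rpow_le hb.strictAnti n h0 h1 hx) hK
    _ = (n : ℝ) ^ (1 - h) * K * (1 - x) ^ h := by ring

lemma pushforwardCDF_sub_le_of_mem_Icc (hf : IsHolderCDF h D K f) (hb : StrictAnti b) (h0 : 0 ≤ h)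
    (hK : 0 ≤ K) (hk : k < n) (hx : x ∈ Icc (b (k + 1)) (b k)) (hy : y ∈ Icc (b (k + 1)) (b k))
    (hxy : x ≤ y) :
    pushforwardCDF b h n f y - pushforwardCDF b h n f x ≤ D ^ 2 * K * (y - x) ^ h := by
  calc pushforwardCDF b h n f y - pushforwardCDF b h n f x
      = gap b k ^ h * (f (inverseBranch b k x) - f (inverseBranch b k y)) := by
        rw [pushforwardCDF_of_mem_Icc hb hf.map_zero hf.map_one hk hx,
          pushforwardCDF_of_mem_Icc hb hf.map_zero hf.map_one hk hy]
        ring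
    _ ≤ D ^ 2 * K * overlap b k x y ^ h := hf.gap_rpow_mul_sub_le hb hxy
    _ ≤ D ^ 2 * K * (y - x) ^ h := by
        gcongr
        exacts [overlap_nonneg hb k hxy, overlap_le hb k hxy]

lemma pushforwardCDF_sub_le_of_forall (hf : IsHolderCDF h D K f) (hb : StrictAnti b) (h0 : 0 < h)
    (h1 : h ≤ 1) (hD : 1 ≤ D) (hK : 0 ≤ K) (hxy : x ≤ y)
    (hends : ∀ k < n, x ≤ b (k + 1) ∨ b k ≤ y) :
    pushforwardCDF b h n f y - pushforwardCDF b h n f x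
      ≤ D * K * ((n : ℝ) ^ (1 - h) * (y - x) ^ h) := by
  have hDK : K ≤ D * K := le_mul_of_one_le_left hK hD
  rw [pushforwardCDF_sub]
  calc ∑ k ∈ Finset.range n, gap b k ^ h * (f (inverseBranch b k x) - f (inverseBranch b k y))
      ≤ ∑ k ∈ Finset.range n, D * K * overlap b k x y ^ h := by
        refine Finset.sum_le_sum fun k hk => ?_
        rcases hends k (Finset.mem_range.1 hk) with hx | hy
        · exact hf.gap_rpow_mul_sub_le_of_le_left hb hxy hx
        · exact (hf.gap_rpow_mul_sub_le_of_le_right hb hxy hy).trans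
            (mul_le_mul_of_nonneg_right hDK (Real.rpow_nonneg (overlap_nonneg hb k hxy) h))
    _ ≤ D * K * ((n : ℝ) ^ (1 - h) * (y - x) ^ h) := by
        rw [← Finset.mul_sum]
        exact mul_le_mul_of_nonneg_left (sum_range_overlap_rpow_le hb n h0 h1 hxy) (hK.trans hDK)

lemma pushforwardCDF_sub_le (hf : IsHolderCDF h ((n : ℝ) ^ (1 - h)) K f) (hb : StrictAnti b)
    (h0 : 0 < h) (h1 : h ≤ 1) (hn : 0 < n) (hK : 0 ≤ K) (hxy : x ≤ y) :
    pushforwardCDF b h n f y - pushforwardCDF b h n f x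
      ≤ ((n : ℝ) ^ (1 - h)) ^ 2 * K * (y - x) ^ h := by
  by_cases hinside : ∃ k < n, b (k + 1) < x ∧ y < b k
  · obtain ⟨k, hk, hx, hy⟩ := hinside
    exact hf.pushforwardCDF_sub_le_of_mem_Icc hb h0.le hK hk ⟨hx.le, hxy.trans hy.le⟩
      ⟨hx.le.trans hxy, hy.le⟩ hxy
  · have hends : ∀ k < n, x ≤ b (k + 1) ∨ b k ≤ y := fun k hk => by
      by_contra! hlt
      exact hinside ⟨k, hk, hlt⟩
    refine (hf.pushforwardCDF_sub_le_of_forall hb h0 h1 (one_le_natCast_rpow_one_sub hn h1) hK hxy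
      hends).trans_eq ?_
    ring

lemma pushforwardCDF (hf : IsHolderCDF h ((n : ℝ) ^ (1 - h)) K f) (hb : IsUnitPartition b)
    (h0 : 0 < h) (h1 : h ≤ 1) (hsum : ∑ k ∈ Finset.range n, gap b k ^ h = 1) (hθ1 : θ ≤ 1)
    (hθ : ∀ k, gap b k ≤ θ * b k) (hK1 : 1 ≤ K)
    (hK : (n : ℝ) ^ (1 - h) + ((n : ℝ) ^ (1 - h) * K - 1) * θ ^ h ≤ K) :
    IsHolderCDF h ((n : ℝ) ^ (1 - h)) K (pushforwardCDF b h n f) where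
  map_zero := pushforwardCDF_eq_zero hb.strictAnti hf.map_one (hb.pos n).le
  map_one := (pushforwardCDF_one hb hf.map_zero).trans hsum
  monotoneOn := (monotone_pushforwardCDF hb.strictAnti hf.monotoneOn).monotoneOn _
  le_at_zero _ hx := hf.pushforwardCDF_le_at_zero hb h0 h1 (pos_of_sum_range_eq_one hsum) hθ1 hθ
    hK1 hK hx
  le_at_one _ hx := hf.one_sub_pushforwardCDF_le hb h0 h1 hsum (zero_le_one.trans hK1) hx.2
  sub_le _ _ _ _ hxy := hf.pushforwardCDF_sub_le hb.strictAnti h0 h1 (pos_of_sum_range_eq_one hsum)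
    (zero_le_one.trans hK1) hxy

end IsHolderCDF

lemma surjOn_pushforwardCDF (hb : StrictAnti b) (hf0 : f 0 = 0) (hf1 : f 1 = 1)
    (hsum : ∑ k ∈ Finset.range n, gap b k ^ h = 1) {E : Set ℝ} (hE : E ⊆ Icc 0 1)
    (hf : SurjOn f E (Icc 0 1)) :
    SurjOn (pushforwardCDF b h n f) (⋃ k ∈ Finset.range n, gAff b (k + 1) '' E) (Icc 0 1) := by
  rintro y ⟨hy0, hy1⟩
  obtain ⟨k, hk, hky⟩ := exists_lt_mem_Icc_succ (s := fun k => ∑ j ∈ Finset.Ico k n, gap b j ^ h)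
    (pos_of_sum_range_eq_one hsum) (by simpa only [← Finset.range_eq_Ico, hsum]) (by simpa)
  have hpos : 0 < gap b k ^ h := Real.rpow_pos_of_pos (gap_pos hb k) h
  set tail := ∑ j ∈ Finset.Ico (k + 1) n, gap b j ^ h with htail
  have hupper : y - tail ≤ gap b k ^ h := by
    have hy := hky.2
    rw [Finset.sum_eq_sum_Ico_succ_bot hk] at hy
    linarith
  have hfrac0 : 0 ≤ (y - tail) / gap b k ^ h := div_nonneg (sub_nonneg.2 hky.1) hpos.le
  have hfrac1 : (y - tail) / gap b k ^ h ≤ 1 := (div_le_one hpos).2 hupper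
  obtain ⟨x, hx, hfx⟩ := hf (show 1 - (y - tail) / gap b k ^ h ∈ Icc (0 : ℝ) 1 from
    ⟨by linarith, by linarith⟩)
  refine ⟨gAff b (k + 1) x, mem_iUnion₂.2 ⟨k, Finset.mem_range.2 hk, x, hx, rfl⟩, ?_⟩
  rw [pushforwardCDF_of_mem_Icc hb hf0 hf1 hk (mapsTo_gAff_succ hb k (hE hx)),
    inverseBranch_gAff_succ hb k (hE hx), hfx, sub_sub_cancel, mul_div_cancel₀ _ hpos.ne', ← htail,
    sub_add_cancel]

end PushforwardCDF

section LowerBound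

variable {b : ℕ → ℝ} {h K θ : ℝ} {n : ℕ}

lemma isHolderCDF_iterate_pushforwardCDF (hb : IsUnitPartition b) (h0 : 0 < h) (h1 : h ≤ 1)
    (hsum : ∑ k ∈ Finset.range n, gap b k ^ h = 1) (hθ1 : θ ≤ 1) (hθ : ∀ k, gap b k ≤ θ * b k)
    (hK1 : 1 ≤ K) (hK : (n : ℝ) ^ (1 - h) + ((n : ℝ) ^ (1 - h) * K - 1) * θ ^ h ≤ K) (l : ℕ) :
    IsHolderCDF h ((n : ℝ) ^ (1 - h)) K ((pushforwardCDF b h n)^[l] id) := by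
  induction l with
  | zero =>
    have hn : 0 < n := pos_of_sum_range_eq_one hsum
    exact isHolderCDF_id h1 (one_le_natCast_rpow_one_sub hn h1) hK1
  | succ l ih =>
    rw [Function.iterate_succ_apply']
    exact ih.pushforwardCDF hb h0 h1 hsum hθ1 hθ hK1 hK

lemma iterate_pushforwardCDF_zero_one (hb : IsUnitPartition b)
    (hsum : ∑ k ∈ Finset.range n, gap b k ^ h = 1) (l : ℕ) :
    (pushforwardCDF b h n)^[l] id 0 = 0 ∧ (pushforwardCDF b h n)^[l] id 1 = 1 := by
  induction l with
  | zero => exact ⟨rfl, rfl⟩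
  | succ l ih =>
    rw [Function.iterate_succ_apply']
    exact ⟨pushforwardCDF_eq_zero hb.strictAnti ih.2 (hb.pos n).le,
      (pushforwardCDF_one hb ih.1).trans hsum⟩

lemma surjOn_iterate_pushforwardCDF (hb : IsUnitPartition b)
    (hsum : ∑ k ∈ Finset.range n, gap b k ^ h = 1) (l : ℕ) :
    SurjOn ((pushforwardCDF b h n)^[l] id) (cylinderUnion (gAff b) n l) (Icc 0 1) := by
  induction l with
  | zero =>
    rw [cylinderUnion_zero]
    exact surjOn_id _
  | succ l ih =>
    obtain ⟨hzero, hone⟩ := iterate_pushforwardCDF_zero_one hb hsum l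
    have hsub : cylinderUnion (gAff b) n l ⊆ Icc 0 1 :=
      (antitone_cylinderUnion hb.mapsTo_gAff_succ l.zero_le).trans_eq (cylinderUnion_zero _ n)
    rw [cylinderUnion_succ, Function.iterate_succ_apply']
    exact surjOn_pushforwardCDF hb.strictAnti hzero hone hsum hsub ih

lemma one_le_mul_hausdorffMeasure_limitSet (hb : IsUnitPartition b) (h0 : 0 < h) (h1 : h ≤ 1)
    (hsum : ∑ k ∈ Finset.range n, gap b k ^ h = 1) (hθ1 : θ ≤ 1) (hθ : ∀ k, gap b k ≤ θ * b k)
    (hK1 : 1 ≤ K) (hK : (n : ℝ) ^ (1 - h) + ((n : ℝ) ^ (1 - h) * K - 1) * θ ^ h ≤ K) :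
    1 ≤ ENNReal.ofReal (((n : ℝ) ^ (1 - h)) ^ 2 * K) * μH[h] (limitSet (gAff b) n) := by
  have hcdf := isHolderCDF_iterate_pushforwardCDF hb h0 h1 hsum hθ1 hθ hK1 hK
  have hE0 := cylinderUnion_zero (gAff b) n
  have hbound := hausdorffMeasure_le_mul_hausdorffMeasure_iInter (d := 1) (Real.toNNReal_pos.2 h0)
    (antitone_cylinderUnion hb.mapsTo_gAff_succ)
    (isCompact_cylinderUnion fun k => by unfold gAff; fun_prop) isCompact_Icc
    (fun l => hE0 ▸ (hcdf l).holderOnWith h0.le (zero_le_one.trans hK1))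
    (fun l => hE0 ▸ (hcdf l).mapsTo)
    (surjOn_iterate_pushforwardCDF hb hsum) zero_le_one
  rwa [hausdorffMeasure_real, Real.volume_Icc, sub_zero, ENNReal.ofReal_one, ENNReal.rpow_one,
    mul_one, Real.coe_toNNReal h h0.le, ENNReal.ofNNReal_toNNReal,
    ← limitSet_eq_iInter_cylinderUnion hb.mapsTo_gAff_succ] at hbound

end LowerBound

section Exponent

variable {b h : ℕ → ℝ} {n : ℕ} {s : ℝ}

lemma exponent_lt_one (hb : IsUnitPartition b) (hsum : ∑ k ∈ Finset.range n, gap b k ^ s = 1) :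
    s < 1 := by
  by_contra! hs
  have hle : ∑ k ∈ Finset.range n, gap b k ^ s ≤ ∑ k ∈ Finset.range n, gap b k :=
    Finset.sum_le_sum fun k _ =>
      Real.rpow_le_self_of_le_one (hb.gap_pos k).le (hb.gap_lt_one k).le hs
  rw [hsum, sum_range_gap, hb.map_zero] at hle
  linarith [hb.pos n]

lemma one_sub_mul_negMulLog_gap_le (hb : IsUnitPartition b)
    (hsum : ∑ k ∈ Finset.range n, gap b k ^ s = 1) :
    (1 - s) * Real.negMulLog (gap b 0) ≤ b n := by
  have hs : 0 ≤ 1 - s := (sub_pos.2 (exponent_lt_one hb hsum)).le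
  have hfirst : Real.negMulLog (gap b 0) ≤ ∑ k ∈ Finset.range n, Real.negMulLog (gap b k) :=
    Finset.single_le_sum (f := fun k => Real.negMulLog (gap b k))
      (fun k _ => Real.negMulLog_nonneg (hb.gap_pos k).le (hb.gap_lt_one k).le)
      (Finset.mem_range.2 (pos_of_sum_range_eq_one hsum))
  have hentropy : (1 - b n) + (1 - s) * ∑ k ∈ Finset.range n, Real.negMulLog (gap b k) ≤ 1 := by
    have hle := Finset.sum_le_sum fun k (_ : k ∈ Finset.range n) =>
      add_mul_negMulLog_le_rpow (hb.gap_pos k) s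
    rwa [Finset.sum_add_distrib, ← Finset.mul_sum, sum_range_gap, hb.map_zero, hsum] at hle
  linarith [mul_le_mul_of_nonneg_left hfirst hs]

lemma tendsto_one_sub_mul_log (hb : IsUnitPartition b)
    (hmoran : ∀ n, 1 ≤ n → ∑ k ∈ Finset.range n, gap b k ^ h n = 1)
    (hlog : Tendsto (fun n : ℕ => b n * Real.log n) atTop (𝓝 0)) :
    Tendsto (fun n : ℕ => (1 - h n) * Real.log n) atTop (𝓝 0) := by
  have hc : 0 < Real.negMulLog (gap b 0) := by
    rw [Real.negMulLog, neg_mul, neg_pos]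
    exact mul_neg_of_pos_of_neg (hb.gap_pos 0) (Real.log_neg (hb.gap_pos 0) (hb.gap_lt_one 0))
  refine squeeze_zero' ?_ ?_ ((hlog.div_const (Real.negMulLog (gap b 0))).trans_eq (by simp))
  · filter_upwards [eventually_ge_atTop 1] with n hn
    exact mul_nonneg (sub_pos.2 (exponent_lt_one hb (hmoran n hn))).le (Real.log_natCast_nonneg n)
  · filter_upwards [eventually_ge_atTop 1] with n hn
    rw [le_div_iff₀ hc, mul_right_comm]
    exact mul_le_mul_of_nonneg_right (one_sub_mul_negMulLog_gap_le hb (hmoran n hn))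
      (Real.log_natCast_nonneg n)

end Exponent

section Limit

variable {b h : ℕ → ℝ}

lemma tendsto_exponent (hC1 : Tendsto (fun n : ℕ => (1 - h n) * Real.log n) atTop (𝓝 0)) :
    Tendsto h atTop (𝓝 1) := by
  have hlog : Tendsto (fun n : ℕ => Real.log n) atTop atTop :=
    Real.tendsto_log_atTop.comp tendsto_natCast_atTop_atTop
  have hsub : Tendsto (fun n => 1 - h n) atTop (𝓝 0) := by
    refine (hC1.div_atTop hlog).congr' ?_
    filter_upwards [hlog.eventually_gt_atTop 0] with n hn
    exact mul_div_cancel_right₀ _ hn.ne'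
  simpa using hsub.const_sub 1

lemma tendsto_natCast_rpow_one_sub
    (hC1 : Tendsto (fun n : ℕ => (1 - h n) * Real.log n) atTop (𝓝 0)) :
    Tendsto (fun n : ℕ => (n : ℝ) ^ (1 - h n)) atTop (𝓝 1) := by
  refine (Real.exp_zero ▸ hC1.rexp).congr' ?_
  filter_upwards [eventually_gt_atTop 0] with n hn
  rw [Real.rpow_def_of_pos (Nat.cast_pos.2 hn), mul_comm]

lemma IsUnitPartition.exists_lt_one_gap_le (hb : IsUnitPartition b)
    (hC2 : ∃ M : ℝ, ∀ k, (b k - b (k + 1)) / b (k + 1) ≤ M) :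
    ∃ θ < 1, ∀ k, gap b k ≤ θ * b k := by
  obtain ⟨M, hM⟩ := hC2
  have hM0 : 0 < M := (div_pos (hb.gap_pos 0) (hb.pos 1)).trans_le (hM 0)
  refine ⟨M / (M + 1), (div_lt_one (by positivity)).2 (by linarith), fun k => ?_⟩
  have hk := (div_le_iff₀ (hb.pos (k + 1))).1 (hM k)
  rw [div_mul_eq_mul_div, le_div_iff₀ (by positivity), gap]
  linarith

lemma IsUnitPartition.hausdorffMeasure_limitSet_le_one {n : ℕ} {s θ : ℝ} (hb : IsUnitPartition b)
    (hs : 0 ≤ s) (hsum : ∑ k ∈ Finset.range n, gap b k ^ s = 1) (hθ1 : θ < 1)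
    (hθ : ∀ k, gap b k ≤ θ * b k) : μH[s] (limitSet (gAff b) n) ≤ 1 := by
  refine _root_.hausdorffMeasure_limitSet_le_one (q := θ.toNNReal) hs
    (lipschitzWith_gAff_succ hb.strictAnti) (fun k => Real.toNNReal_le_toNNReal ?_)
    (Real.toNNReal_lt_one.2 hθ1) ?_
  · exact (hθ k).trans (mul_le_of_le_one_right (hb.nonneg_of_gap_le hθ) (hb.le_one k))
  · simp_rw [← Real.toNNReal_rpow_of_nonneg (hb.gap_pos _).le]
    rw [← Real.toNNReal_sum_of_nonneg fun k _ => Real.rpow_nonneg (hb.gap_pos k).le s, hsum,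
      Real.toNNReal_one]

/-- The fixed point of `K ↦ D + (D * K - 1) * t`, which is the recursion for the Hölder constant at
`0` under `pushforwardCDF` with `t = θ ^ h`. -/
def holderConstant (D t : ℝ) : ℝ := (D - t) / (1 - D * t)

lemma one_le_holderConstant {D t : ℝ} (ht : 0 ≤ t) (hD : 1 ≤ D) (hDt : D * t < 1) :
    1 ≤ holderConstant D t := by
  rw [holderConstant, one_le_div (sub_pos.2 hDt)]
  nlinarith

lemma add_mul_holderConstant {D t : ℝ} (hDt : D * t < 1) :
    D + (D * holderConstant D t - 1) * t = holderConstant D t := by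
  have hfix : holderConstant D t * (1 - D * t) = D - t := div_mul_cancel₀ _ (sub_pos.2 hDt).ne'
  linarith

lemma tendsto_holderConstant {ι : Type*} {l : Filter ι} {D t : ι → ℝ} {t₀ : ℝ} (ht₀ : t₀ < 1)
    (hD : Tendsto D l (𝓝 1)) (ht : Tendsto t l (𝓝 t₀)) :
    Tendsto (fun i => holderConstant (D i) (t i)) l (𝓝 1) := by
  have hne : 1 - 1 * t₀ ≠ 0 := by rw [one_mul]; exact (sub_pos.2 ht₀).ne'
  have hlim := (hD.sub ht).div ((hD.mul ht).const_sub 1) hne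
  rwa [one_mul, div_self (sub_pos.2 ht₀).ne'] at hlim

lemma tendsto_hausdorffMeasure_limitSet (hb : IsUnitPartition b)
    (hmoran : ∀ n, 1 ≤ n → ∑ k ∈ Finset.range n, gap b k ^ h n = 1)
    (hC1 : Tendsto (fun n : ℕ => (1 - h n) * Real.log n) atTop (𝓝 0))
    (hC2 : ∃ M : ℝ, ∀ k, (b k - b (k + 1)) / b (k + 1) ≤ M) :
    Tendsto (fun n => μH[h n] (limitSet (gAff b) n)) atTop (𝓝 1) := by
  obtain ⟨θ, hθ1, hθ⟩ := hb.exists_lt_one_gap_le hC2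
  have hθ0 : 0 ≤ θ := hb.nonneg_of_gap_le hθ
  have hD := tendsto_natCast_rpow_one_sub hC1
  have ht : Tendsto (fun n => θ ^ h n) atTop (𝓝 θ) := by
    simpa using (tendsto_const_nhds (x := θ)).rpow (tendsto_exponent hC1) (Or.inr one_pos)
  have hlower : Tendsto (fun n : ℕ => (ENNReal.ofReal
      (((n : ℝ) ^ (1 - h n)) ^ 2 * holderConstant ((n : ℝ) ^ (1 - h n)) (θ ^ h n)))⁻¹)
      atTop (𝓝 1) := by
    simpa using (ENNReal.tendsto_ofReal
      ((hD.pow 2).mul (tendsto_holderConstant hθ1 hD ht))).inv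
  have hpos : ∀ᶠ n in atTop, 0 < h n := (tendsto_exponent hC1).eventually_const_lt one_pos
  have hDt : ∀ᶠ n : ℕ in atTop, (n : ℝ) ^ (1 - h n) * θ ^ h n < 1 :=
    (hD.mul ht).eventually_lt_const (by rwa [one_mul])
  refine tendsto_of_tendsto_of_tendsto_of_le_of_le' hlower tendsto_const_nhds ?_ ?_
  · filter_upwards [hpos, hDt, eventually_ge_atTop 1] with n h0 hDt hn
    have h1 : h n ≤ 1 := (exponent_lt_one hb (hmoran n hn)).le
    rw [← one_div]
    refine ENNReal.div_le_of_le_mul' ?_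
    exact one_le_mul_hausdorffMeasure_limitSet hb h0 h1 (hmoran n hn) hθ1.le hθ
      (one_le_holderConstant (Real.rpow_nonneg hθ0 _) (one_le_natCast_rpow_one_sub hn h1) hDt)
      (add_mul_holderConstant hDt).le
  · filter_upwards [hpos, eventually_ge_atTop 1] with n h0 hn
    exact hb.hausdorffMeasure_limitSet_le_one h0.le (hmoran n hn) hθ1 hθ

end Limit

section PowerSequence

variable {α : ℝ} {b : ℕ → ℝ}

lemma isUnitPartition_of_eq_one_div_rpow (hα : 0 < α) (hb : ∀ k : ℕ, b k = 1 / ((k : ℝ) + 1) ^ α) :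
    IsUnitPartition b where
  strictAnti := strictAnti_nat_of_succ_lt fun k => by
    rw [hb, hb]
    push_cast
    gcongr
    linarith
  map_zero := by simp [hb]
  pos k := by rw [hb]; positivity

lemma sub_succ_div_succ_le_two_rpow (hα : 0 ≤ α) (hb : ∀ k : ℕ, b k = 1 / ((k : ℝ) + 1) ^ α)
    (k : ℕ) : (b k - b (k + 1)) / b (k + 1) ≤ 2 ^ α := by
  have hpos : 0 < b (k + 1) := by rw [hb]; positivity
  have hratio : b k ≤ 2 ^ α * b (k + 1) := by
    rw [hb, hb, mul_one_div, div_le_div_iff₀ (by positivity) (by positivity), one_mul,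
      ← Real.mul_rpow zero_le_two (by positivity)]
    push_cast
    gcongr
    linarith
  rw [div_le_iff₀ hpos]
  linarith

lemma tendsto_mul_log_of_eq_one_div_rpow (hα : 0 < α)
    (hb : ∀ k : ℕ, b k = 1 / ((k : ℝ) + 1) ^ α) :
    Tendsto (fun n : ℕ => b n * Real.log n) atTop (𝓝 0) := by
  have hlog : Tendsto (fun n : ℕ => Real.log n / (n : ℝ) ^ α) atTop (𝓝 0) :=
    (isLittleO_log_rpow_atTop hα).tendsto_div_nhds_zero.comp tendsto_natCast_atTop_atTop
  refine squeeze_zero' (Eventually.of_forall fun n => ?_) ?_ hlog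
  · rw [hb]
    exact mul_nonneg (by positivity) (Real.log_natCast_nonneg n)
  · filter_upwards [eventually_gt_atTop 0] with n hn
    have hn0 : (0 : ℝ) < n := Nat.cast_pos.2 hn
    rw [hb, one_div_mul_eq_div]
    exact div_le_div_of_nonneg_left (Real.log_natCast_nonneg n) (Real.rpow_pos_of_pos hn0 α)
      (Real.rpow_le_rpow hn0.le (by linarith) hα.le)

end PowerSequence

lemma sum_Icc_one_rpow_eq_sum_range_gap_rpow (b : ℕ → ℝ) (n : ℕ) (s : ℝ) :
    ∑ k ∈ Finset.Icc 1 n, (b (k - 1) - b k) ^ s = ∑ k ∈ Finset.range n, gap b k ^ s := by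
  rw [Finset.range_eq_Ico, ← Finset.Ico_add_one_right_eq_Icc]
  exact (Finset.sum_Ico_add' (fun k => (b (k - 1) - b k) ^ s) 0 n 1).symm

/-- For `b_k = 1/(k+1)^α` with `α > 0`, conditions (C1) and (C2) hold, and consequently
    `lim_{n→∞} H_{h_n}(J_n) = 1`. -/
theorem polynomial_example
    (α : ℝ) (hα : 0 < α)
    (b : ℕ → ℝ) (h : ℕ → ℝ)
    (hb : ∀ k : ℕ, b k = 1 / ((k : ℝ) + 1) ^ α)
    (hmoran : ∀ n, 1 ≤ n → ∑ k ∈ Finset.Icc 1 n, (b (k - 1) - b k) ^ h n = 1)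
    (hdimH : ∀ n, 1 ≤ n → dimH (limitSet (gAff b) n) = ENNReal.ofReal (h n)) :
    Filter.Tendsto (fun n : ℕ => (1 - h n) * Real.log n) Filter.atTop (nhds 0) ∧
    (∃ M : ℝ, ∀ k : ℕ, (b k - b (k + 1)) / b (k + 1) ≤ M) ∧
    Filter.Tendsto (fun n : ℕ => μH[h n] (limitSet (gAff b) n)) Filter.atTop (nhds 1) := by
  have hpart := isUnitPartition_of_eq_one_div_rpow hα hb
  have hsum : ∀ n, 1 ≤ n → ∑ k ∈ Finset.range n, gap b k ^ h n = 1 := fun n hn => by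
    rw [← sum_Icc_one_rpow_eq_sum_range_gap_rpow, hmoran n hn]
  have hC1 := tendsto_one_sub_mul_log hpart hsum (tendsto_mul_log_of_eq_one_div_rpow hα hb)
  have hC2 : ∃ M : ℝ, ∀ k : ℕ, (b k - b (k + 1)) / b (k + 1) ≤ M :=
    ⟨2 ^ α, sub_succ_div_succ_le_two_rpow hα.le hb⟩
  exact ⟨hC1, hC2, tendsto_hausdorffMeasure_limitSet hpart hsum hC1 hC2⟩
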